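/- arXiv:2306.08432 — 3 statements merged into one kernel-verified Lean document; each statement's English description precedes it below -/
import Mathlib

section
/- Let X and Y be random vectors in ℝ^n with laws having finite first moments, and let D ⊂ ℝ^n be a compact set with P(X ∉ D) ≤ ε, P(Y ∉ D) ≤ δ, and P(X ∈ D) > 0, P(Y ∈ D) > 0. Let X_D and Y_D denote X and Y conditioned on the events {X ∈ D} and {Y ∈ D}, respectively. Then W₁(X_D, Y_D) ≤ W₁(X, Y) + (ε + δ)·max_{x,y ∈ D} ‖x − y‖₂. -/
open MeasureTheory ProbabilityTheory

noncomputable section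

/-- The 1-Wasserstein distance between two measures on a normed space: the infimum of
`E‖X − Y‖` over all couplings. -/
def W1 {E : Type*} [NormedAddCommGroup E] [MeasurableSpace E] (μ ν : Measure E) : ℝ :=
  sInf {c : ℝ | ∃ π : Measure (E × E), IsProbabilityMeasure π ∧
    π.map Prod.fst = μ ∧ π.map Prod.snd = ν ∧ c = ∫ q, ‖q.1 - q.2‖ ∂π}

theorem W1_core {E : Type*} [NormedAddCommGroup E] [MeasurableSpace E] [BorelSpace E]
    [SecondCountableTopology E]
    (μ' ν' : Measure E) [IsProbabilityMeasure μ'] [IsProbabilityMeasure ν']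
    (D : Set E) (hDb : Bornology.IsBounded D) (hDm : MeasurableSet D)
    (hμ : μ' Dᶜ = 0) (hν : ν' Dᶜ = 0)
    (π : Measure (E × E)) [IsProbabilityMeasure π]
    (hint : Integrable (fun q : E × E => ‖q.1 - q.2‖) π)
    (h1 : (π.restrict (D ×ˢ D)).map Prod.fst ≤ μ')
    (h2 : (π.restrict (D ×ˢ D)).map Prod.snd ≤ ν')
    (t : ℝ) (ht : 0 ≤ t) (hπ : π (D ×ˢ D)ᶜ ≤ ENNReal.ofReal t) :
    W1 μ' ν' ≤ ∫ q, ‖q.1 - q.2‖ ∂π + t * Metric.diam D := by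
  set ρ := π.restrict (D ×ˢ D) with hρ
  set α := μ' - ρ.map Prod.fst with hα
  set β := ν' - ρ.map Prod.snd with hβ
  set s := π (D ×ˢ D)ᶜ with hs
  have hDD : MeasurableSet (D ×ˢ D) := hDm.prod hDm
  have hs_top : s ≠ ⊤ := measure_ne_top _ _
  have hsr : s = 1 - ρ Set.univ := by
    rw [hs, prob_compl_eq_one_sub hDD, hρ, Measure.restrict_apply_univ]
  have : IsFiniteMeasure (ρ.map Prod.fst) := Measure.isFiniteMeasure_map _ _
  have : IsFiniteMeasure (ρ.map Prod.snd) := Measure.isFiniteMeasure_map _ _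
  have hα1 : α + ρ.map Prod.fst = μ' := Measure.sub_add_cancel_of_le h1
  have hβ1 : β + ρ.map Prod.snd = ν' := Measure.sub_add_cancel_of_le h2
  have hαle : α ≤ μ' := Measure.sub_le
  have hβle : β ≤ ν' := Measure.sub_le
  have : IsFiniteMeasure α := isFiniteMeasure_of_le _ hαle
  have : IsFiniteMeasure β := isFiniteMeasure_of_le _ hβle
  have hαu : α Set.univ = s := by
    rw [hα, Measure.sub_apply MeasurableSet.univ h1, measure_univ,
      Measure.map_apply measurable_fst MeasurableSet.univ, Set.preimage_univ, hsr]
  have hβu : β Set.univ = s := by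
    rw [hβ, Measure.sub_apply MeasurableSet.univ h2, measure_univ,
      Measure.map_apply measurable_snd MeasurableSet.univ, Set.preimage_univ, hsr]
  set γ := s⁻¹ • α.prod β with hγ
  have hfst : γ.map Prod.fst = α := by
    rw [hγ, Measure.map_smul, Measure.map_fst_prod, hβu, smul_smul]
    by_cases h0 : s = 0
    · have : α = 0 := Measure.measure_univ_eq_zero.1 (hαu.trans h0)
      simp [this]
    · rw [ENNReal.inv_mul_cancel h0 hs_top, one_smul]
  have hsnd : γ.map Prod.snd = β := by
    rw [hγ, Measure.map_smul, Measure.map_snd_prod, hαu, smul_smul]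
    by_cases h0 : s = 0
    · have : β = 0 := Measure.measure_univ_eq_zero.1 (hβu.trans h0)
      simp [this]
    · rw [ENNReal.inv_mul_cancel h0 hs_top, one_smul]
  have hγu : γ Set.univ = s := by
    rw [← hαu, ← hfst, Measure.map_apply measurable_fst MeasurableSet.univ, Set.preimage_univ]
  have : IsFiniteMeasure γ := ⟨by rw [hγu]; exact hs_top.lt_top⟩
  have hαD : α Dᶜ = 0 := le_antisymm ((hαle _).trans hμ.le) bot_le
  have hβD : β Dᶜ = 0 := le_antisymm ((hβle _).trans hν.le) bot_le
  have hae1 : ∀ᵐ q ∂γ, q.1 ∈ D := by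
    rw [ae_iff]
    have := hαD
    rwa [← hfst, Measure.map_apply measurable_fst hDm.compl] at this
  have hae2 : ∀ᵐ q ∂γ, q.2 ∈ D := by
    rw [ae_iff]
    have := hβD
    rwa [← hsnd, Measure.map_apply measurable_snd hDm.compl] at this
  have hbd : ∀ᵐ q ∂γ, ‖(‖q.1 - q.2‖ : ℝ)‖ ≤ Metric.diam D := by
    filter_upwards [hae1, hae2] with q hq1 hq2
    rw [norm_norm, ← dist_eq_norm]
    exact Metric.dist_le_diam_of_mem hDb hq1 hq2
  have hmeas : Measurable (fun q : E × E => ‖q.1 - q.2‖) :=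
    (continuous_fst.sub continuous_snd).norm.measurable
  have hγint : Integrable (fun q : E × E => ‖q.1 - q.2‖) γ :=
    Integrable.of_bound hmeas.aestronglyMeasurable _ hbd
  have hρint : Integrable (fun q : E × E => ‖q.1 - q.2‖) ρ := hint.restrict
  have hmem : W1 μ' ν' ≤ ∫ q, ‖q.1 - q.2‖ ∂(γ + ρ) := by
    refine csInf_le ⟨0, ?_⟩ ⟨γ + ρ, ⟨?_⟩, ?_, ?_, rfl⟩
    · rintro c ⟨_, _, _, _, rfl⟩
      exact integral_nonneg fun _ => norm_nonneg _
    · rw [Measure.add_apply, hγu, hs, hρ, Measure.restrict_apply_univ, add_comm,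
        measure_add_measure_compl hDD, measure_univ]
    · rw [Measure.map_add _ _ measurable_fst, hfst, hα1]
    · rw [Measure.map_add _ _ measurable_snd, hsnd, hβ1]
  rw [integral_add_measure hγint hρint] at hmem
  have hA : ∫ q, ‖q.1 - q.2‖ ∂ρ ≤ ∫ q, ‖q.1 - q.2‖ ∂π :=
    setIntegral_le_integral hint (Filter.Eventually.of_forall fun _ => norm_nonneg _)
  have hB : ∫ q, ‖q.1 - q.2‖ ∂γ ≤ Metric.diam D * γ.real Set.univ :=
    (le_abs_self _).trans (norm_integral_le_of_norm_le_const hbd)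
  have hC : γ.real Set.univ ≤ t := by
    rw [Measure.real, hγu]
    exact ENNReal.toReal_le_of_le_ofReal ht hπ
  have := mul_le_mul_of_nonneg_left hC (Metric.diam_nonneg (s := D))
  linarith

theorem W1_cond_map {Ω E : Type*} [MeasurableSpace Ω] [MeasurableSpace E]
    (P : Measure Ω) (X : Ω → E) (hX : Measurable X) (D : Set E) (hD : MeasurableSet D) :
    (ProbabilityTheory.cond P (X ⁻¹' D)).map X = ProbabilityTheory.cond (P.map X) D := by
  ext s hs
  rw [Measure.map_apply hX hs, cond_apply (hX hD), cond_apply hD, Measure.map_apply hX hD,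
    Measure.map_apply hX (hD.inter hs), Set.preimage_inter]

theorem W1_restrict_le_cond {E : Type*} [MeasurableSpace E] (μ : Measure E)
    [IsProbabilityMeasure μ] (D : Set E) (hD : MeasurableSet D) :
    μ.restrict D ≤ ProbabilityTheory.cond μ D := by
  refine Measure.le_iff.2 fun s hs => ?_
  rw [cond_apply hD, Measure.restrict_apply hs, Set.inter_comm]
  calc μ (D ∩ s) = 1 * μ (D ∩ s) := (one_mul _).symm
    _ ≤ _ := by gcongr; exact ENNReal.one_le_inv.2 prob_le_one

/-- Stability of the 1-Wasserstein distance under conditioning on a high-probability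
compact set: if `P(X ∉ D) ≤ ε` and `P(Y ∉ D) ≤ δ`, then the Wasserstein distance between
the conditional laws of `X` and `Y` given membership in `D` exceeds `W₁(X,Y)` by at most
`(ε + δ) · diam D` (where `diam D = max_{x,y ∈ D} ‖x − y‖`). -/
theorem W1_cond_le
    (n : ℕ) {Ω Ω' : Type*} [MeasurableSpace Ω] [MeasurableSpace Ω']
    (P : Measure Ω) (Q : Measure Ω')
    [IsProbabilityMeasure P] [IsProbabilityMeasure Q]
    (X : Ω → EuclideanSpace ℝ (Fin n)) (Y : Ω' → EuclideanSpace ℝ (Fin n))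
    (hXmeas : Measurable X) (hYmeas : Measurable Y)
    (hXint : Integrable (fun ω => ‖X ω‖) P) (hYint : Integrable (fun ω => ‖Y ω‖) Q)
    (D : Set (EuclideanSpace ℝ (Fin n))) (hD : IsCompact D)
    (ε δ : ℝ) (hε : 0 ≤ ε) (hδ : 0 ≤ δ)
    (hXD : P (X ⁻¹' D)ᶜ ≤ ENNReal.ofReal ε) (hYD : Q (Y ⁻¹' D)ᶜ ≤ ENNReal.ofReal δ)
    (hXpos : 0 < P (X ⁻¹' D)) (hYpos : 0 < Q (Y ⁻¹' D)) :
    W1 ((ProbabilityTheory.cond P (X ⁻¹' D)).map X) ((ProbabilityTheory.cond Q (Y ⁻¹' D)).map Y)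
      ≤ W1 (P.map X) (Q.map Y) + (ε + δ) * Metric.diam D := by
  have hDm : MeasurableSet D := hD.isClosed.measurableSet
  rw [W1_cond_map P X hXmeas D hDm, W1_cond_map Q Y hYmeas D hDm]
  have : IsProbabilityMeasure (P.map X) := Measure.isProbabilityMeasure_map hXmeas.aemeasurable
  have : IsProbabilityMeasure (Q.map Y) := Measure.isProbabilityMeasure_map hYmeas.aemeasurable
  have hXI : Integrable id (P.map X) := by
    rw [integrable_map_measure aestronglyMeasurable_id hXmeas.aemeasurable]
    exact (integrable_norm_iff hXmeas.aestronglyMeasurable).1 hXint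
  have hYI : Integrable id (Q.map Y) := by
    rw [integrable_map_measure aestronglyMeasurable_id hYmeas.aemeasurable]
    exact (integrable_norm_iff hYmeas.aestronglyMeasurable).1 hYint
  rw [← Set.preimage_compl, ← Measure.map_apply hXmeas hDm.compl] at hXD
  rw [← Set.preimage_compl, ← Measure.map_apply hYmeas hDm.compl] at hYD
  rw [← Measure.map_apply hXmeas hDm] at hXpos
  rw [← Measure.map_apply hYmeas hDm] at hYpos
  generalize P.map X = μ at *
  generalize Q.map Y = ν at *
  have := cond_isProbabilityMeasure hXpos.ne'
  have := cond_isProbabilityMeasure hYpos.ne'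
  rw [← sub_le_iff_le_add]
  refine le_csInf ⟨_, μ.prod ν, inferInstance, by simp, by simp, rfl⟩ ?_
  rintro c ⟨π, hπ, h1, h2, rfl⟩
  rw [sub_le_iff_le_add]
  have key : ∀ (f : EuclideanSpace ℝ (Fin n) × EuclideanSpace ℝ (Fin n) →
      EuclideanSpace ℝ (Fin n)), Measurable f → D ×ˢ D ⊆ f ⁻¹' D →
      (π.restrict (D ×ˢ D)).map f ≤ ProbabilityTheory.cond (π.map f) D := by
    intro f hf hsub
    have : IsProbabilityMeasure (π.map f) := Measure.isProbabilityMeasure_map hf.aemeasurable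
    refine le_trans ?_ (W1_restrict_le_cond _ D hDm)
    rw [Measure.restrict_map hf hDm]
    exact Measure.map_mono (Measure.restrict_mono hsub le_rfl) hf
  refine W1_core _ _ D hD.isBounded hDm ?_ ?_ π ?_ ?_ ?_ _ (by positivity) ?_
  · rw [cond_apply hDm]; simp
  · rw [cond_apply hDm]; simp
  · rw [← h1] at hXI
    rw [← h2] at hYI
    exact ((hXI.comp_measurable measurable_fst).sub (hYI.comp_measurable measurable_snd)).norm
  · have := key Prod.fst measurable_fst (fun q hq => hq.1)
    rwa [h1] at this
  · have := key Prod.snd measurable_snd (fun q hq => hq.2)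
    rwa [h2] at this
  · rw [ENNReal.ofReal_add hε hδ]
    rw [← h1, Measure.map_apply measurable_fst hDm.compl] at hXD
    rw [← h2, Measure.map_apply measurable_snd hDm.compl] at hYD
    refine le_trans (measure_mono ?_) ((measure_union_le _ _).trans (add_le_add hXD hYD))
    intro q hq
    by_contra h
    simp only [Set.mem_union, Set.mem_preimage, Set.mem_compl_iff, not_or, not_not] at h
    exact hq h
end
end

section
/- Let p, m ∈ ℕ with m < p, and let c ≥ 0 be a real number with 1 + 2c ≤ p − m. Let t₀, t₁, …, t_m ∈ [0,1] satisfy t₀ = 1 and t_{j+1} ≤ t_j·(1 − (1 + c·t_j)/(p − j)) for all 0 ≤ j < m. Then t_j ≤ (1 − j/p)/(1 + c·j/p) for all 0 ≤ j ≤ m. -/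
/-- The discrete recursion governing the parameter bias of the batch minimum-norm
estimator: if `t 0 = 1`, each `t j` lies in `[0,1]`, and
`t (j+1) ≤ t j * (1 - (1 + c * t j) / (p - j))` for `j < m`, with `c ≥ 0` and
`1 + 2c ≤ p - m`, then `t j ≤ (1 - j/p) / (1 + c * (j/p))` for all `j ≤ m`. -/
theorem bias_recursion_upper_bound (p m : ℕ) (hm : m < p) (c : ℝ) (hc : 0 ≤ c)
    (hcp : 1 + 2 * c ≤ (p : ℝ) - (m : ℝ))
    (t : ℕ → ℝ) (ht01 : ∀ j ≤ m, t j ∈ Set.Icc (0:ℝ) 1) (ht0 : t 0 = 1)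
    (hrec : ∀ j < m, t (j + 1) ≤ t j * (1 - (1 + c * t j) / ((p : ℝ) - (j : ℝ)))) :
    ∀ j ≤ m, t j ≤ (1 - (j : ℝ) / p) / (1 + c * ((j : ℝ) / p)) := by
  have hmp : (m : ℝ) < p := by exact_mod_cast hm
  have hp : (0 : ℝ) < p := lt_of_le_of_lt (Nat.cast_nonneg m) hmp
  have key : ∀ x : ℝ, (1 - x / p) / (1 + c * (x / p)) = (p - x) / (p + c * x) := by
    intro x
    have h1 : 1 - x / p = (p - x) / p := by field_simp
    have h2 : 1 + c * (x / p) = (p + c * x) / p := by field_simp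
    rw [h1, h2, div_div_div_cancel_right₀ hp.ne']
  intro j
  induction j with
  | zero => intro _; simp [ht0]
  | succ j ih =>
    intro hj
    have ih := ih (by omega)
    obtain ⟨_, hx1⟩ := ht01 j (by omega)
    have hr := hrec j (by omega)
    have hjm : (j : ℝ) + 1 ≤ m := by exact_mod_cast hj
    have hj0 : (0 : ℝ) ≤ j := Nat.cast_nonneg j
    rw [key] at ih ⊢
    push_cast
    have hcj : 0 ≤ c * j := mul_nonneg hc hj0
    have hD : (0 : ℝ) < p + c * j := by linarith
    have hd : (0 : ℝ) < p - j := by linarith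
    have hg1 : ((p : ℝ) - j) / (p + c * j) ≤ 1 := by
      rw [div_le_one hD]; linarith
    set g : ℝ := ((p : ℝ) - j) / (p + c * j) with hg
    have hgD : g * (p + c * j) = p - j := div_mul_cancel₀ _ hD.ne'
    have hg0 : 0 < g := div_pos hd hD
    have hmono : t j * (1 - (1 + c * t j) / ((p : ℝ) - j))
        ≤ g * (1 - (1 + c * g) / ((p : ℝ) - j)) := by
      have h1 : (1 + c * (g + t j)) / ((p : ℝ) - j) ≤ 1 := by
        rw [div_le_one hd]
        nlinarith
      have h2 := mul_nonneg (sub_nonneg.2 ih) (sub_nonneg.2 h1)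
      have h3 : (g - t j) * (1 - (1 + c * (g + t j)) / ((p : ℝ) - j))
        = g * (1 - (1 + c * g) / ((p : ℝ) - j)) - t j * (1 - (1 + c * t j) / ((p : ℝ) - j)) := by
        ring
      linarith
    refine (hr.trans hmono).trans ?_
    have h4 : g * (1 - (1 + c * g) / ((p : ℝ) - j))
        = ((p : ℝ) - j - 1 - c * g) / (p + c * j) := by
      rw [hg]; field_simp; ring
    rw [h4, div_le_div_iff₀ hD (by nlinarith)]
    nlinarith [mul_nonneg (mul_nonneg hc hc) hg0.le, congrArg (fun y => c * y) hgD]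
end

section
/- For every γ > 1 and every ξ ∈ (0,1): 1 − (2ξ − ξ²)/γ + ξ(1−ξ)/(γ−1) < 1 − 1/γ + (1−ξ)/(ξ(γ−1)). -/
/-- The limiting risk of the shrinkage estimator `ξ·β̂_MN` is strictly smaller than the
limiting risk of the minimum-norm estimator, for every overparametrization ratio `γ > 1`
and every normalized SNR `ξ ∈ (0,1)`. -/
theorem shrunk_min_norm_beats_min_norm (γ ξ : ℝ) (hγ : 1 < γ) (hξ : ξ ∈ Set.Ioo (0:ℝ) 1) :
    1 - (2 * ξ - ξ ^ 2) / γ + ξ * (1 - ξ) / (γ - 1) <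
      1 - 1 / γ + (1 - ξ) / (ξ * (γ - 1)) := by
  obtain ⟨h0, h1⟩ := hξ
  have hg : 0 < γ - 1 := by linarith
  have hγ0 : 0 < γ := by linarith
  have h2 : 0 < 1 - ξ := by linarith
  have key : (1 - 1 / γ + (1 - ξ) / (ξ * (γ - 1))) -
      (1 - (2 * ξ - ξ ^ 2) / γ + ξ * (1 - ξ) / (γ - 1)) =
      (1 - ξ) ^ 2 * (γ + ξ) / (ξ * γ * (γ - 1)) := by
    have := hg.ne'
    field_simp
    ring
  have hpos : 0 < (1 - ξ) ^ 2 * (γ + ξ) / (ξ * γ * (γ - 1)) := by positivity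
  linarith
end
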